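/- arXiv:cs/0502019 — 10 statements merged into one kernel-verified Lean document; each statement's English description precedes it below -/
import Mathlib

section
/- (Symmetric equilibrium of the opposite-weight game) Let 1/2 ≤ α < 1 and consider the two-user, two-machine game in which both users have budget 1, user 1 has weights (α, 1−α) and user 2 has weights (1−α, α). Then the bid profile x = (α, 1−α) for user 1 and y = (1−α, α) for user 2 is a Nash equilibrium; at this equilibrium the social welfare is U = 2 − 4α(1−α), the social optimum is U* = 2α, and the efficiency satisfies U/U* = 2α + 1/α − 2 ≥ 2√2 − 2, with equality exactly when α = √2/2. -/
open Finset

/-- User `i`'s utility at the bid profile `x` (division by zero is zero, matching the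
convention that a machine with no bids is allocated to nobody). -/
noncomputable def util (m n : ℕ) (w x : Fin m → Fin n → ℝ) (i : Fin m) : ℝ :=
  ∑ j, w i j * (x i j / ∑ k, x k j)

/-- A bid profile is feasible if all bids are nonnegative and each user spends exactly
his budget. -/
def Feasible (m n : ℕ) (X : Fin m → ℝ) (x : Fin m → Fin n → ℝ) : Prop :=
  (∀ i j, 0 ≤ x i j) ∧ ∀ i, ∑ j, x i j = X i

/-- Nash equilibrium: a feasible profile where no user can strictly increase his utility
by unilaterally replacing his own bid vector with another feasible one. -/
def IsNash (m n : ℕ) (X : Fin m → ℝ) (w x : Fin m → Fin n → ℝ) : Prop :=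
  Feasible m n X x ∧
    ∀ (i : Fin m) (xi : Fin n → ℝ), (∀ j, 0 ≤ xi j) → ∑ j, xi j = X i →
      util m n w (Function.update x i xi) i ≤ util m n w x i

lemma share_le (c x : ℝ) (hc : 0 < c) (hx : 0 ≤ x) :
    x / (x + c) ≤ (1 - c) + c * (x - (1 - c)) := by
  rw [div_le_iff₀ (by linarith)]
  nlinarith [mul_nonneg hc.le (sq_nonneg (x + c - 1))]

lemma dev_le (α a b : ℝ) (h0 : 0 < α) (h1 : α < 1) (ha : 0 ≤ a) (hb : 0 ≤ b)
    (hab : a + b = 1) :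
    α * (a / (a + (1 - α))) + (1 - α) * (b / (b + α)) ≤ α * α + (1 - α) * (1 - α) := by
  have e1 := mul_le_mul_of_nonneg_left (share_le (1 - α) a (by linarith) ha) h0.le
  have e2 := mul_le_mul_of_nonneg_left (share_le α b h0 hb) (by linarith : 0 ≤ 1 - α)
  obtain rfl : b = 1 - a := by linarith
  nlinarith

/-- Symmetric equilibrium of the opposite-weight game: for `1/2 ≤ α < 1`,
in the two-user two-machine game with budgets `1`, user 1's weights `(α, 1-α)` and user
2's weights `(1-α, α)`, the profile `x = (α, 1-α)`, `y = (1-α, α)` is a Nash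
equilibrium; the social welfare there is `U = 2 - 4α(1-α)`, the social optimum is
`U* = 2α`, the efficiency is `U/U* = 2α + 1/α - 2 ≥ 2√2 - 2`, with equality exactly
when `α = √2/2`. -/
theorem oppositeWeight_symmetric_equilibrium (α : ℝ) (hα0 : 1 / 2 ≤ α) (hα1 : α < 1) :
    let w : Fin 2 → Fin 2 → ℝ := ![![α, 1 - α], ![1 - α, α]]
    let xstar : Fin 2 → Fin 2 → ℝ := ![![α, 1 - α], ![1 - α, α]]
    IsNash 2 2 (fun _ => 1) w xstar ∧
    (∑ i, util 2 2 w xstar i = 2 - 4 * α * (1 - α)) ∧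
    (∑ j, max (w 0 j) (w 1 j) = 2 * α) ∧
    ((∑ i, util 2 2 w xstar i) / (∑ j, max (w 0 j) (w 1 j)) = 2 * α + 1 / α - 2) ∧
    (2 * Real.sqrt 2 - 2 ≤ 2 * α + 1 / α - 2) ∧
    (2 * α + 1 / α - 2 = 2 * Real.sqrt 2 - 2 ↔ α = Real.sqrt 2 / 2) := by
  intro w xstar
  have h0 : 0 < α := by linarith
  have hU : ∑ i, util 2 2 w xstar i = 2 - 4 * α * (1 - α) := by
    simp [util, w, xstar, Fin.sum_univ_two]
    ring
  have hO : ∑ j, max (w 0 j) (w 1 j) = 2 * α := by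
    simp only [w, Fin.sum_univ_two, Matrix.cons_val_zero, Matrix.cons_val_one]
    rw [max_eq_left (by linarith), max_eq_right (by linarith)]
    ring
  have hs : Real.sqrt 2 * Real.sqrt 2 = 2 := Real.mul_self_sqrt (by norm_num)
  have key : 2 * α + 1 / α - 2 - (2 * Real.sqrt 2 - 2)
      = (2 * α - Real.sqrt 2) ^ 2 / (2 * α) := by
    field_simp
    nlinarith
  refine ⟨⟨⟨?_, ?_⟩, ?_⟩, hU, hO, ?_, ?_, ?_⟩
  · intro i j
    fin_cases i <;> fin_cases j <;> simp [xstar] <;> linarith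
  · intro i
    fin_cases i <;> simp [xstar, Fin.sum_univ_two]
  · intro i xi hp hsum
    have ha := hp 0
    have hb := hp 1
    simp only [Fin.sum_univ_two] at hsum
    fin_cases i
    · have := dev_le α (xi 0) (xi 1) h0 hα1 ha hb hsum
      simpa [util, w, xstar, Fin.sum_univ_two] using this
    · have := dev_le α (xi 1) (xi 0) h0 hα1 hb ha (by linarith)
      simp [util, w, xstar, Fin.sum_univ_two]
      rw [add_comm α (xi 0), add_comm (1 - α) (xi 1)]
      linarith
  · rw [hU, hO]
    field_simp
    ring
  · have : 0 ≤ (2 * α - Real.sqrt 2) ^ 2 / (2 * α) := by positivity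
    linarith
  · constructor
    · intro h
      rw [h, sub_self] at key
      have h2 : (2 * α - Real.sqrt 2) ^ 2 = 0 := by
        rcases div_eq_zero_iff.mp key.symm with h | h
        · exact h
        · linarith
      have := pow_eq_zero_iff (two_ne_zero) |>.mp h2
      linarith
    · intro h
      have h3 : 2 * α - Real.sqrt 2 = 0 := by linarith
      rw [h3] at key
      simp only [ne_eq, OfNat.ofNat_ne_zero, not_false_eq_true, zero_pow, zero_div] at key
      linarith
end

section
/- (Cubic equation for opposite-weight equilibria) Let 0 < α < 1 and 0 < x, y < 1, and suppose α·y/(x+y)^2 = (1−α)(1−y)/(2−x−y)^2 and (1−α)·x/(x+y)^2 = α(1−x)/(2−x−y)^2 (the first-order equilibrium conditions for the opposite-weight two-player two-machine game, where x and y are the two users' bids on machine 1). Then δ = (2−x−y)/(x+y) satisfies δ^3 − cδ^2 + cδ − 1 = 0, where c = 1/(2α(1−α)) − 1. -/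
/-- Cubic equation for opposite-weight equilibria: if `0 < α < 1`,
`0 < x, y < 1`, and the first-order equilibrium conditions
`α·y/(x+y)² = (1-α)(1-y)/(2-x-y)²` and `(1-α)·x/(x+y)² = α(1-x)/(2-x-y)²` hold, then
`δ = (2-x-y)/(x+y)` satisfies `δ³ - cδ² + cδ - 1 = 0` where `c = 1/(2α(1-α)) - 1`. -/
theorem oppositeWeight_cubic (α x y : ℝ) (hα0 : 0 < α) (hα1 : α < 1)
    (hx0 : 0 < x) (hx1 : x < 1) (hy0 : 0 < y) (hy1 : y < 1)
    (h1 : α * y / (x + y) ^ 2 = (1 - α) * (1 - y) / (2 - x - y) ^ 2)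
    (h2 : (1 - α) * x / (x + y) ^ 2 = α * (1 - x) / (2 - x - y) ^ 2) :
    ((2 - x - y) / (x + y)) ^ 3
      - (1 / (2 * α * (1 - α)) - 1) * ((2 - x - y) / (x + y)) ^ 2
      + (1 / (2 * α * (1 - α)) - 1) * ((2 - x - y) / (x + y)) - 1 = 0 := by
  have hs : 0 < x + y := by linarith
  have ht : 0 < 2 - x - y := by linarith
  have hb : 0 < 1 - α := by linarith
  obtain ⟨D, hD⟩ : ∃ D, D = (2 - x - y) / (x + y) := ⟨_, rfl⟩
  have hDpos : 0 < D := by rw [hD]; positivity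
  have hDs : 2 - x - y = D * (x + y) := by rw [hD]; field_simp
  rw [← hD]
  rw [hDs] at h1 h2
  have e1 : y * (α * D ^ 2 + (1 - α)) = 1 - α := by
    field_simp at h1
    linear_combination h1
  have e2 : x * ((1 - α) * D ^ 2 + α) = α := by
    field_simp at h2
    linear_combination h2
  have key : (2 * α * (1 - α) * D) * (D ^ 3 - 1)
      - (1 - 2 * α * (1 - α)) * D * (D ^ 2 - D) = 0 := by
    linear_combination (1 + D) * ((1 - α) * D ^ 2 + α) * e1
      + (1 + D) * (α * D ^ 2 + (1 - α)) * e2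
      + (α * D ^ 2 + (1 - α)) * ((1 - α) * D ^ 2 + α) * hDs
  have hne : 2 * α * (1 - α) * D ≠ 0 := by positivity
  apply mul_left_cancel₀ hne
  rw [mul_zero, ← key]
  field_simp
  ring
end

section
/- (Asymmetric equilibria threshold) Let 0 < α < 1, let c = 1/(2α(1−α)) − 1, and let f(δ) = δ^3 − cδ^2 + cδ − 1. Then δ = 1 is always a root of f, and f has a positive real root different from 1 if and only if α > α₀ or α < 1 − α₀, where α₀ = (2+√2)/4; moreover in that case f has three distinct positive real roots. -/
/-- Asymmetric equilibria threshold: for `0 < α < 1`, with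
`c = 1/(2α(1-α)) - 1` and `f(δ) = δ³ - cδ² + cδ - 1`, `δ = 1` is always a root of `f`;
`f` has a positive real root different from `1` iff `α > α₀` or `α < 1 - α₀`, where
`α₀ = (2 + √2)/4`; and in that case `f` has three distinct positive real roots. -/
theorem asymmetric_equilibria_threshold (α : ℝ) (hα0 : 0 < α) (hα1 : α < 1) :
    let c : ℝ := 1 / (2 * α * (1 - α)) - 1
    let f : ℝ → ℝ := fun δ => δ ^ 3 - c * δ ^ 2 + c * δ - 1
    let α₀ : ℝ := (2 + Real.sqrt 2) / 4
    f 1 = 0 ∧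
    ((∃ δ : ℝ, 0 < δ ∧ δ ≠ 1 ∧ f δ = 0) ↔ (α₀ < α ∨ α < 1 - α₀)) ∧
    ((α₀ < α ∨ α < 1 - α₀) →
      ∃ δ₁ δ₂ δ₃ : ℝ, 0 < δ₁ ∧ 0 < δ₂ ∧ 0 < δ₃ ∧
        δ₁ ≠ δ₂ ∧ δ₁ ≠ δ₃ ∧ δ₂ ≠ δ₃ ∧ f δ₁ = 0 ∧ f δ₂ = 0 ∧ f δ₃ = 0) := by
  intro c f α₀
  have hp : 0 < 2 * α * (1 - α) := by
    have : 0 < 1 - α := by linarith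
    positivity
  have h2 : Real.sqrt 2 ^ 2 = 2 := Real.sq_sqrt (by norm_num)
  have h2p : 0 < Real.sqrt 2 := Real.sqrt_pos.mpr (by norm_num)
  have hα₀ : α₀ = (2 + Real.sqrt 2) / 4 := rfl
  have key : 3 < c ↔ (α₀ < α ∨ α < 1 - α₀) := by
    have h1 : 3 < c ↔ 4 * (2 * α * (1 - α)) < 1 := by
      rw [← lt_div_iff₀ hp]
      constructor
      · intro h
        change 3 < 1 / (2 * α * (1 - α)) - 1 at h
        linarith
      · intro h
        change 3 < 1 / (2 * α * (1 - α)) - 1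
        linarith
    rw [h1, hα₀]
    constructor
    · intro h
      by_contra hc
      rw [not_or, not_lt, not_lt] at hc
      obtain ⟨ha, hb⟩ := hc
      nlinarith [mul_nonneg (sub_nonneg.mpr ha) (sub_nonneg.mpr hb)]
    · rintro (h | h)
      · nlinarith [mul_pos (sub_pos.mpr h) h2p]
      · nlinarith [mul_pos (sub_pos.mpr h) h2p]
  have hf : ∀ δ, f δ = (δ - 1) * (δ ^ 2 - (c - 1) * δ + 1) := by
    intro δ
    change δ ^ 3 - c * δ ^ 2 + c * δ - 1 = _
    ring
  have hroots : 3 < c → ∃ δ₁ δ₂ δ₃ : ℝ, 0 < δ₁ ∧ 0 < δ₂ ∧ 0 < δ₃ ∧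
        δ₁ ≠ δ₂ ∧ δ₁ ≠ δ₃ ∧ δ₂ ≠ δ₃ ∧ f δ₁ = 0 ∧ f δ₂ = 0 ∧ f δ₃ = 0 := by
    simp only [hf]
    clear_value c
    intro hc
    have hpos : 0 < (c - 1) ^ 2 - 4 := by nlinarith
    obtain ⟨s, hs, hs2⟩ : ∃ s : ℝ, 0 < s ∧ s ^ 2 = (c - 1) ^ 2 - 4 :=
      ⟨_, Real.sqrt_pos.mpr hpos, Real.sq_sqrt hpos.le⟩
    have hsb : s < c - 1 := by nlinarith
    refine ⟨1, (c - 1 + s) / 2, (c - 1 - s) / 2, by norm_num, by linarith, by linarith,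
      ?_, ?_, ?_, by ring, ?_, ?_⟩
    · intro h
      linarith
    · intro h
      have : s = c - 3 := by linarith
      subst this
      nlinarith
    · intro h
      linarith
    · apply mul_eq_zero_of_right
      linear_combination hs2 / 4
    · apply mul_eq_zero_of_right
      linear_combination hs2 / 4
  refine ⟨by rw [hf]; ring, ?_, fun h => hroots (key.mpr h)⟩
  rw [← key]
  constructor
  · rintro ⟨δ, hδ, hne, h0⟩
    rw [hf] at h0
    have hq := (mul_eq_zero.mp h0).resolve_left (sub_ne_zero.mpr hne)
    have hsq : 0 < (δ - 1) ^ 2 := by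
      have := sub_ne_zero.mpr hne
      positivity
    clear_value c
    by_contra hc
    rw [not_lt] at hc
    nlinarith [mul_nonneg (sub_nonneg.mpr hc) hδ.le]
  · intro hc
    obtain ⟨d1, d2, d3, h1, h2, h3, h12, _, _, f1, f2, f3⟩ := hroots hc
    by_cases h : d1 = 1
    · exact ⟨d2, h2, fun e => h12 (h.trans e.symm), f2⟩
    · exact ⟨d1, h1, h, f1⟩
end

section
/- (Theorem 2, efficiency) In any strongly competitive normalized two-player price-anticipating allocation game, every Nash equilibrium ω satisfies U(ω) ≥ (3/4)·U*, where U(ω) is the social welfare at ω and U* is the social optimum; moreover the constant 3/4 is tight in the worst case. -/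
open Finset

/-- `x` is a best response (with budget one) of a user with weights `a` against bids `y`. -/
def BestResp (n : ℕ) (a x y : Fin n → ℝ) : Prop :=
  ∀ z : Fin n → ℝ, (∀ j, 0 ≤ z j) → ∑ j, z j = 1 →
    ∑ j, a j * (z j / (z j + y j)) ≤ ∑ j, a j * (x j / (x j + y j))

lemma util_zero (n : ℕ) (w x : Fin 2 → Fin n → ℝ) :
    util 2 n w x 0 = ∑ j, w 0 j * (x 0 j / (x 0 j + x 1 j)) := by
  simp [util, Fin.sum_univ_two]

lemma util_one (n : ℕ) (w x : Fin 2 → Fin n → ℝ) :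
    util 2 n w x 1 = ∑ j, w 1 j * (x 1 j / (x 1 j + x 0 j)) := by
  simp [util, Fin.sum_univ_two, add_comm]

lemma isNash_iff (n : ℕ) (w x : Fin 2 → Fin n → ℝ) :
    IsNash 2 n (fun _ => 1) w x ↔ ((∀ i j, 0 ≤ x i j) ∧ ∀ i, ∑ j, x i j = 1) ∧
      BestResp n (w 0) (x 0) (x 1) ∧ BestResp n (w 1) (x 1) (x 0) := by
  unfold IsNash Feasible BestResp
  rw [Fin.forall_fin_two (p := fun i => ∀ xi : Fin n → ℝ, _)]
  simp [util_zero, util_one]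

/-- Moving `t` from machine `j` to machine `k` does not help. -/
lemma two_move {n : ℕ} {a x y : Fin n → ℝ} (hx : ∀ j, 0 ≤ x j) (hs : ∑ j, x j = 1)
    (hB : BestResp n a x y) {j k : Fin n} (hjk : j ≠ k) {t : ℝ} (h1 : t ≤ x j)
    (h2 : -x k ≤ t) :
    a j * ((x j - t) / (x j - t + y j)) + a k * ((x k + t) / (x k + t + y k)) ≤
      a j * (x j / (x j + y j)) + a k * (x k / (x k + y k)) := by
  classical
  have key : ∀ F G : Fin n → ℝ, (∀ l, l ≠ j → l ≠ k → F l = G l) →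
      ∑ l, F l - ∑ l, G l = (F j - G j) + (F k - G k) := by
    intro F G h
    rw [← Finset.sum_sub_distrib, ← Finset.sum_pair (f := fun l => F l - G l) hjk]
    symm
    apply Finset.sum_subset (Finset.subset_univ _)
    intro l _ hl
    simp at hl
    rw [h l hl.1 hl.2, sub_self]
  let z : Fin n → ℝ := fun l => if l = j then x j - t else if l = k then x k + t else x l
  have zj : z j = x j - t := by simp [z]
  have zk : z k = x k + t := by simp [z, hjk.symm]
  have zl : ∀ l, l ≠ j → l ≠ k → z l = x l := by
    intro l h h'; simp [z, h, h']
  have h := hB z ?_ ?_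
  · have := key (fun l => a l * (z l / (z l + y l))) (fun l => a l * (x l / (x l + y l)))
      (by intro l h h'; simp [zl l h h'])
    simp only [zj, zk] at this
    linarith
  · intro l
    by_cases h : l = j
    · subst h; rw [zj]; linarith
    by_cases h' : l = k
    · subst h'; rw [zk]; linarith
    rw [zl l h h']; exact hx l
  · have := key z x zl
    rw [zj, zk] at this
    linarith

lemma zero_of_zero {n : ℕ} {a x y : Fin n → ℝ} (ha : ∀ j, 0 < a j) (hx : ∀ j, 0 ≤ x j)
    (hs : ∑ j, x j = 1) (hy : ∀ j, 0 ≤ y j) (hsy : ∑ j, y j = 1)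
    (hB : BestResp n a x y) (j : Fin n) (hj : y j = 0) : x j = 0 := by
  by_contra hne
  have hpos : 0 < x j := lt_of_le_of_ne (hx j) (Ne.symm hne)
  obtain ⟨k, -, hk⟩ : ∃ k ∈ Finset.univ, 0 < y k := by
    apply Finset.exists_lt_of_sum_lt (f := fun _ => (0:ℝ))
    simp [hsy]
  have hjk : j ≠ k := by rintro rfl; linarith
  have h := two_move hx hs hB hjk (t := x j / 2) (by linarith) (by linarith [hx k])
  rw [hj] at h
  have e1 : (x j - x j / 2) / (x j - x j / 2 + 0) = 1 := by
    rw [add_zero]; apply div_self; linarith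
  have e2 : x j / (x j + 0) = 1 := by rw [add_zero]; exact div_self hne
  rw [e1, e2] at h
  have h3 : x k / (x k + y k) < (x k + x j / 2) / (x k + x j / 2 + y k) := by
    have := hx k
    rw [div_lt_div_iff₀ (by linarith) (by linarith)]
    nlinarith [mul_pos hpos hk]
  nlinarith [mul_lt_mul_of_pos_left h3 (ha k)]

lemma not_both_zero {n : ℕ} {a x y : Fin n → ℝ} (ha : ∀ j, 0 < a j) (hx : ∀ j, 0 ≤ x j)
    (hs : ∑ j, x j = 1) (hy : ∀ j, 0 ≤ y j)
    (hB : BestResp n a x y) (j : Fin n) (hxj : x j = 0) (hyj : y j = 0)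
    (hxy : ∀ k, y k = 0 → x k = 0) : False := by
  obtain ⟨k, -, hk⟩ : ∃ k ∈ Finset.univ, 0 < x k := by
    apply Finset.exists_lt_of_sum_lt (f := fun _ => (0:ℝ))
    simp [hs]
  have hyk : 0 < y k := lt_of_le_of_ne (hy k) (fun h => hk.ne' (hxy k h.symm))
  have hkj : k ≠ j := by rintro rfl; linarith
  have haj := ha j
  have hak := ha k
  set t := min (x k) (a j * (x k + y k) / (2 * a k)) with ht
  have t0 : 0 < t := lt_min hk (by positivity)
  have t1 : t ≤ x k := min_le_left _ _
  have t2 : t * (2 * a k) ≤ a j * (x k + y k) := by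
    rw [← le_div_iff₀ (by positivity)]; exact min_le_right _ _
  have h := two_move hx hs hB hkj (t := t) t1 (by linarith [hx j])
  rw [hxj, hyj] at h
  have e1 : (0 + t) / (0 + t + 0) = 1 := by
    rw [add_zero, zero_add]; exact div_self t0.ne'
  rw [e1] at h
  simp only [zero_div, mul_zero, add_zero, mul_one] at h
  have h3 : x k / (x k + y k) - (x k - t) / (x k - t + y k) ≤ t / (x k + y k) := by
    have p1 : 0 < x k + y k := by linarith
    have p2 : 0 < x k - t + y k := by linarith
    have : t / (x k + y k) - (x k / (x k + y k) - (x k - t) / (x k - t + y k))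
      = t * (x k - t) / ((x k + y k) * (x k - t + y k)) := by
      field_simp; ring
    have : 0 ≤ t * (x k - t) / ((x k + y k) * (x k - t + y k)) := by
      apply div_nonneg (mul_nonneg t0.le (by linarith)) (by positivity)
    linarith
  have h4 : a k * (t / (x k + y k)) ≤ a j / 2 := by
    rw [← mul_div_assoc, div_le_iff₀ (by linarith)]
    linarith
  have h5 := mul_le_mul_of_nonneg_left h3 hak.le
  linarith

lemma deriv_share (a y x : ℝ) (h : x + y ≠ 0) :
    HasDerivAt (fun z => a * (z / (z + y))) (a * y / (x + y) ^ 2) x := by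
  have := (((hasDerivAt_id x).div ((hasDerivAt_id x).add_const y) h).const_mul a)
  refine this.congr_deriv ?_
  simp only [id]
  field_simp
  ring

lemma foc_pair {n : ℕ} {a x y : Fin n → ℝ} (hx : ∀ j, 0 < x j)
    (hs : ∑ j, x j = 1) (hy : ∀ j, 0 < y j) (hB : BestResp n a x y) (j k : Fin n) :
    a j * y j / (x j + y j) ^ 2 = a k * y k / (x k + y k) ^ 2 := by
  by_cases hjk : j = k
  · rw [hjk]
  have pj := add_pos (hx j) (hy j)
  have pk := add_pos (hx k) (hy k)
  let f : ℝ → ℝ := fun t => a j * ((x j - t) / (x j - t + y j)) +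
    a k * ((x k + t) / (x k + t + y k))
  have d1 : HasDerivAt (fun t : ℝ => a j * ((x j - t) / (x j - t + y j)))
      (-(a j * y j / (x j + y j) ^ 2)) 0 := by
    have := (deriv_share (a j) (y j) (x j - 0) (by rw [sub_zero]; exact pj.ne')).comp_const_sub (x j) 0
    simpa using this
  have d2 : HasDerivAt (fun t : ℝ => a k * ((x k + t) / (x k + t + y k)))
      (a k * y k / (x k + y k) ^ 2) 0 := by
    have := (deriv_share (a k) (y k) (x k + 0) (by rw [add_zero]; exact pk.ne')).comp_const_add (x k) 0
    simpa using this
  have hmax : IsLocalMax f 0 := by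
    have : Set.Ioo (-x k) (x j) ∈ nhds (0:ℝ) := Ioo_mem_nhds (by linarith [hx k]) (hx j)
    filter_upwards [this] with t ht
    have := two_move (fun j => (hx j).le) hs hB hjk ht.2.le ht.1.le
    simpa [f] using this
  have := hmax.hasDerivAt_eq_zero (d1.add d2)
  linarith

/-- Necessary conditions at an equilibrium. -/
lemma nash_foc {n : ℕ} {a b x y : Fin n → ℝ} (ha : ∀ j, 0 < a j) (hb : ∀ j, 0 < b j)
    (hx : ∀ j, 0 ≤ x j) (hs : ∑ j, x j = 1) (hy : ∀ j, 0 ≤ y j) (hsy : ∑ j, y j = 1)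
    (hB : BestResp n a x y) (hC : BestResp n b y x) :
    (∀ j, 0 < x j) ∧ (∀ j, 0 < y j) ∧ ∃ l m : ℝ, 0 < l ∧ 0 < m ∧
      (∀ j, a j * y j = l * (x j + y j) ^ 2) ∧ (∀ j, b j * x j = m * (x j + y j) ^ 2) := by
  have z1 := zero_of_zero ha hx hs hy hsy hB
  have z2 := zero_of_zero hb hy hsy hx hs hC
  have px : ∀ j, 0 < x j := fun j => lt_of_le_of_ne (hx j) fun h =>
    not_both_zero ha hx hs hy hB j h.symm (z2 j h.symm) z1
  have py : ∀ j, 0 < y j := fun j => lt_of_le_of_ne (hy j) fun h =>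
    not_both_zero ha hx hs hy hB j (z1 j h.symm) h.symm z1
  obtain ⟨k, -, hk⟩ : ∃ k ∈ Finset.univ, 0 < x k := by
    apply Finset.exists_lt_of_sum_lt (f := fun _ => (0:ℝ))
    simp [hs]
  have := px k
  have := py k
  have := ha k
  have := hb k
  refine ⟨px, py, a k * y k / (x k + y k) ^ 2, b k * x k / (y k + x k) ^ 2,
    by positivity, by positivity, fun j => ?_, fun j => ?_⟩
  · have := px j
    have := py j
    rw [foc_pair px hs py hB k j]
    field_simp
  · have := px j
    have := py j
    rw [foc_pair py hsy px hC k j, add_comm (x j)]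
    field_simp

lemma util_of_foc {n : ℕ} {a x y : Fin n → ℝ} {l : ℝ} (hx : ∀ j, 0 < x j)
    (hs : ∑ j, x j = 1) (hy : ∀ j, 0 < y j) (hsy : ∑ j, y j = 1) (ha : ∑ j, a j = 1)
    (h : ∀ j, a j * y j = l * (x j + y j) ^ 2) :
    ∑ j, a j * (x j / (x j + y j)) = 1 - 2 * l := by
  have : ∀ j, a j * (x j / (x j + y j)) = a j - l * (x j + y j) := by
    intro j
    have p := add_pos (hx j) (hy j)
    field_simp
    linarith [h j]
  simp_rw [this]
  rw [Finset.sum_sub_distrib, ← Finset.mul_sum, Finset.sum_add_distrib, hs, hsy, ha]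
  ring

lemma l_le {n : ℕ} {a x y : Fin n → ℝ} {l : ℝ} (hl : 0 < l)
    (hs : ∑ j, x j = 1) (hy : ∀ j, 0 < y j) (ha : ∑ j, a j = 1)
    (h : ∀ j, a j * y j = l * (x j + y j) ^ 2) : l ≤ 1 / 4 := by
  have : ∑ j, (4 * l) * x j ≤ ∑ j, a j := by
    apply Finset.sum_le_sum
    intro j _
    have := hy j
    have h3 : 4 * l * x j * y j ≤ a j * y j := by
      rw [h j]; nlinarith [mul_nonneg hl.le (sq_nonneg (x j - y j))]
    exact le_of_mul_le_mul_right h3 this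
  rw [← Finset.mul_sum, hs, ha] at this
  linarith

lemma pointwise {a b x y l m : ℝ} (hx : 0 < x) (hy : 0 < y) (hm : 0 < m) (hml : m ≤ l)
    (h1 : a * y = l * (x + y) ^ 2) (h2 : b * x = m * (x + y) ^ 2) :
    l * m * (15 / 4 * x + 3 / 2 * y) - 9 / 16 * m * a ≤ l * min a b := by
  have hl : 0 < l := by linarith
  have ea : a = l * (x + y) ^ 2 / y := by field_simp; linarith
  have eb : b = m * (x + y) ^ 2 / x := by field_simp; linarith
  rw [mul_min_of_nonneg _ _ hl.le]
  apply le_min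
  · have : m * (15 / 4 * x + 3 / 2 * y) * y ≤ (1 + 9 / 16 * (m / l)) * (a * y) := by
      rw [h1]
      have : (1 + 9 / 16 * (m / l)) * (l * (x + y) ^ 2) = (l + 9 / 16 * m) * (x + y) ^ 2 := by
        field_simp
      rw [this]
      nlinarith [mul_nonneg (sub_nonneg.2 hml) (sq_nonneg (x + y)),
        mul_nonneg hm.le (sq_nonneg (5 * x - y)), mul_nonneg hm.le (sq_nonneg (x - y)), mul_pos hx hy]
    have h3 : l * (m * (15 / 4 * x + 3 / 2 * y)) * y ≤ l * ((1 + 9 / 16 * (m / l)) * (a * y)) := by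
      rw [mul_assoc]; exact mul_le_mul_of_nonneg_left this hl.le
    have h4 : l * ((1 + 9 / 16 * (m / l)) * (a * y)) = (l * a + 9 / 16 * m * a) * y := by
      field_simp
    rw [h4] at h3
    have := le_of_mul_le_mul_right h3 hy
    linarith
  · rw [ea, eb]
    have : l * (m * (x + y) ^ 2 / x) - (l * m * (15 / 4 * x + 3 / 2 * y) -
        9 / 16 * m * (l * (x + y) ^ 2 / y)) = l * m / (x * y) *
        ((x + y) ^ 2 * y - (15 / 4 * x + 3 / 2 * y) * (x * y) + 9 / 16 * (x + y) ^ 2 * x) := by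
      field_simp
      ring
    have h0 : 0 ≤ (x + y) ^ 2 * y - (15 / 4 * x + 3 / 2 * y) * (x * y)
        + 9 / 16 * (x + y) ^ 2 * x := by
      have : 0 < x ^ 3 := by positivity
      have : 0 < y ^ 3 := by positivity
      nlinarith [mul_nonneg hx.le (sq_nonneg (x - y)), mul_nonneg hx.le (sq_nonneg (x - 2 * y)),
        mul_nonneg hy.le (sq_nonneg (x - y)), mul_nonneg hx.le (sq_nonneg (3 * x - 4 * y)),
        mul_nonneg hy.le (sq_nonneg (x - 2 * y)), mul_nonneg hy.le (sq_nonneg (2 * x - y))]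
    have : 0 ≤ l * m / (x * y) := by positivity
    have := mul_nonneg this h0
    linarith

lemma efficiency {n : ℕ} {a b x y : Fin n → ℝ} {l m : ℝ} (hx : ∀ j, 0 < x j)
    (hs : ∑ j, x j = 1) (hy : ∀ j, 0 < y j) (hsy : ∑ j, y j = 1) (ha : ∑ j, a j = 1)
    (hb : ∑ j, b j = 1) (hm : 0 < m) (hml : m ≤ l)
    (h1 : ∀ j, a j * y j = l * (x j + y j) ^ 2) (h2 : ∀ j, b j * x j = m * (x j + y j) ^ 2) :
    3 / 4 * (∑ j, max (a j) (b j)) ≤ 2 - 2 * l - 2 * m := by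
  have hl : 0 < l := by linarith
  have hl4 := l_le hl hs hy ha h1
  have e : ∑ j, max (a j) (b j) = 2 - ∑ j, min (a j) (b j) := by
    rw [eq_sub_iff_add_eq, ← Finset.sum_add_distrib]
    simp_rw [max_add_min]
    rw [Finset.sum_add_distrib, ha, hb]; norm_num
  have hp := Finset.sum_le_sum (s := Finset.univ)
    (fun j _ => pointwise (hx j) (hy j) hm hml (h1 j) (h2 j))
  rw [Finset.sum_sub_distrib, ← Finset.mul_sum, ← Finset.mul_sum, ← Finset.mul_sum,
    Finset.sum_add_distrib, ← Finset.mul_sum, ← Finset.mul_sum, hs, hsy, ha] at hp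
  rw [e]
  set S := ∑ j, min (a j) (b j)
  have h3 : l * (8 / 3 * (l + m) - 2 / 3) ≤ l * S := by
    nlinarith [mul_nonneg hm.le (sub_nonneg.2 hml), mul_nonneg hl.le (sub_nonneg.2 hl4),
      mul_nonneg hm.le (sub_nonneg.2 hl4), mul_nonneg (sub_nonneg.2 hml) (sub_nonneg.2 hl4),
      mul_nonneg (mul_nonneg hm.le (sub_nonneg.2 hml)) (sub_nonneg.2 hl4)]
  have := le_of_mul_le_mul_left h3 hl
  linarith

lemma bestResp_of_foc {n : ℕ} {a x y : Fin n → ℝ} {l : ℝ} (hl : 0 < l) (hx : ∀ j, 0 < x j)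
    (hs : ∑ j, x j = 1) (hy : ∀ j, 0 < y j)
    (h : ∀ j, a j * y j = l * (x j + y j) ^ 2) : BestResp n a x y := by
  intro z hz hzs
  have : ∀ j, a j * (z j / (z j + y j)) ≤ a j * (x j / (x j + y j)) + l * (z j - x j) := by
    intro j
    have hx := hx j
    have hy := hy j
    have hz := hz j
    have ea : a j = l * (x j + y j) ^ 2 / y j := by field_simp; linarith [h j]
    have p : 0 < z j + y j := by linarith
    have : a j * (x j / (x j + y j)) + l * (z j - x j) - a j * (z j / (z j + y j))
        = l * (z j - x j) ^ 2 / (z j + y j) := by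
      rw [ea]; field_simp; ring
    have : 0 ≤ l * (z j - x j) ^ 2 / (z j + y j) := by positivity
    linarith
  have := Finset.sum_le_sum (s := Finset.univ) (fun j _ => this j)
  rw [Finset.sum_add_distrib, ← Finset.mul_sum, Finset.sum_sub_distrib, hs, hzs] at this
  linarith

lemma tight (d ε : ℝ) (d0 : 0 < d) (d1 : d ≤ 1 / 9) (hd : 8 * d ≤ ε) :
      ∃ (n : ℕ) (w : Fin 2 → Fin n → ℝ),
        (∀ i j, 0 ≤ w i j) ∧ (∀ i, ∑ j, w i j = 1) ∧
        (∀ j, ∃ i k : Fin 2, i ≠ k ∧ 0 < w i j ∧ 0 < w k j) ∧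
        ∃ x : Fin 2 → Fin n → ℝ, IsNash 2 n (fun _ => 1) w x ∧
          ∑ i, util 2 n w x i < (3 / 4 + ε) * (∑ j, max (w 0 j) (w 1 j)) := by
  have d3 : d ^ 3 ≤ d := by nlinarith [mul_pos d0 d0]
  have d3' : 0 < d ^ 3 := by positivity
  let x : Fin 2 → ℝ := ![1 - d ^ 3, d ^ 3]
  let y : Fin 2 → ℝ := ![1 - d, d]
  have hx : ∀ j, 0 < x j := by
    intro j; fin_cases j <;> simp [x] <;> linarith
  have hy : ∀ j, 0 < y j := by
    intro j; fin_cases j <;> simp [y] <;> linarith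
  have hs : ∑ j, x j = 1 := by simp [x, Fin.sum_univ_two]
  have hsy : ∑ j, y j = 1 := by simp [y, Fin.sum_univ_two]
  let L : ℝ := ∑ j, (x j + y j) ^ 2 / y j
  let M : ℝ := ∑ j, (x j + y j) ^ 2 / x j
  have pa : ∀ j, 0 < (x j + y j) ^ 2 / y j := fun j => by
    have := hx j; have := hy j; positivity
  have pb : ∀ j, 0 < (x j + y j) ^ 2 / x j := fun j => by
    have := hx j; have := hy j; positivity
  have L0 : 0 < L := Finset.sum_pos (fun j _ => pa j) Finset.univ_nonempty
  have M0 : 0 < M := Finset.sum_pos (fun j _ => pb j) Finset.univ_nonempty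
  let a : Fin 2 → ℝ := fun j => (x j + y j) ^ 2 / y j / L
  let b : Fin 2 → ℝ := fun j => (x j + y j) ^ 2 / x j / M
  have a0 : ∀ j, 0 < a j := fun j => div_pos (pa j) L0
  have b0 : ∀ j, 0 < b j := fun j => div_pos (pb j) M0
  have sa : ∑ j, a j = 1 := by
    simp only [a]; rw [← Finset.sum_div]; exact div_self L0.ne'
  have sb : ∑ j, b j = 1 := by
    simp only [b]; rw [← Finset.sum_div]; exact div_self M0.ne'
  have fa : ∀ j, a j * y j = L⁻¹ * (x j + y j) ^ 2 := by
    intro j; have := (hy j).ne'; simp only [a]; field_simp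
  have fb : ∀ j, b j * x j = M⁻¹ * (y j + x j) ^ 2 := by
    intro j; have := (hx j).ne'; simp only [b]; rw [add_comm (y j)]; field_simp
  refine ⟨2, ![a, b], ?_, ?_, ?_, ![x, y], ?_, ?_⟩
  · simp only [Fin.forall_fin_two (p := fun i => ∀ j, 0 ≤ (![a, b] : Fin 2 → Fin 2 → ℝ) i j)]
    exact ⟨fun j => (a0 j).le, fun j => (b0 j).le⟩
  · rw [Fin.forall_fin_two]
    exact ⟨sa, sb⟩
  · exact fun j => ⟨0, 1, by decide, a0 j, b0 j⟩
  · rw [isNash_iff]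
    refine ⟨⟨?_, ?_⟩, ?_, ?_⟩
    · rw [Fin.forall_fin_two]
      exact ⟨fun j => (hx j).le, fun j => (hy j).le⟩
    · rw [Fin.forall_fin_two]
      exact ⟨hs, hsy⟩
    · exact bestResp_of_foc (inv_pos.2 L0) hx hs hy fa
    · exact bestResp_of_foc (inv_pos.2 M0) hy hsy hx fb
  · rw [Fin.sum_univ_two, util_zero, util_one]
    have u1 := util_of_foc hx hs hy hsy sa fa
    have u2 := util_of_foc hy hsy hx hs sb fb
    change ∑ j, a j * (x j / (x j + y j)) + ∑ j, b j * (y j / (y j + x j)) <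
      (3 / 4 + ε) * ∑ j, max (a j) (b j)
    rw [u1, u2]
    have hU : 2 - a 1 - b 0 ≤ ∑ j, max (a j) (b j) := by
      rw [Fin.sum_univ_two]
      rw [Fin.sum_univ_two] at sa sb
      linarith [le_max_left (a 0) (b 0), le_max_right (a 1) (b 1)]
    have il4 : L⁻¹ ≤ 1 / 4 := l_le (inv_pos.2 L0) hs hy sa fa
    have Ml : 1 / d ≤ M := by
      have : 1 / d ≤ (x 1 + y 1) ^ 2 / x 1 := by
        simp only [x, y, Matrix.cons_val_one, Matrix.cons_val_fin_one]
        rw [div_le_div_iff₀ d0 d3']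
        nlinarith [mul_pos d0 d3', mul_pos d3' d3', mul_pos (mul_pos d0 d3') d3']
      simp only [M]; rw [Fin.sum_univ_two]
      linarith [pb 0]
    have iM : M⁻¹ ≤ d := by
      rw [inv_le_comm₀ M0 d0, inv_eq_one_div]; exact Ml
    have iM0 := inv_pos.2 M0
    have iL0 := inv_pos.2 L0
    have q2 : (x 1 + y 1) ^ 2 / y 1 ≤ 4 * d := by
      simp only [x, y, Matrix.cons_val_one, Matrix.cons_val_fin_one]
      rw [div_le_iff₀ d0]
      nlinarith
    have q1 : (x 0 + y 0) ^ 2 / y 0 ≤ 4 + d := by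
      simp only [x, y, Matrix.cons_val_zero]
      rw [div_le_iff₀ (by linarith)]
      have : (1 - d ^ 3 + (1 - d)) ^ 2 ≤ (2 - d) ^ 2 := by
        apply pow_le_pow_left₀ <;> linarith
      nlinarith
    have q3 : (x 0 + y 0) ^ 2 / x 0 ≤ 8 := by
      simp only [x, y, Matrix.cons_val_zero]
      rw [div_le_iff₀ (by linarith)]
      have : (1 - d ^ 3 + (1 - d)) ^ 2 ≤ (2) ^ 2 := by
        apply pow_le_pow_left₀ <;> linarith
      nlinarith
    have Lu : L ≤ 4 + 5 * d := by
      simp only [L]; rw [Fin.sum_univ_two]; linarith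
    have a1 : a 1 ≤ d := by
      have : a 1 = (x 1 + y 1) ^ 2 / y 1 * L⁻¹ := by simp only [a]; rw [div_eq_mul_inv _ L]
      rw [this]
      nlinarith [mul_le_mul q2 il4 iL0.le (by linarith)]
    have b1 : b 0 ≤ 8 * d := by
      have : b 0 = (x 0 + y 0) ^ 2 / x 0 * M⁻¹ := by simp only [b]; rw [div_eq_mul_inv _ M]
      rw [this]
      exact mul_le_mul q3 iM iM0.le (by norm_num)
    have iL : 1 / 4 - 5 * d / 16 ≤ L⁻¹ := by
      have : (1 / 4 - 5 * d / 16) * L ≤ 1 := by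
        have : 0 ≤ 1 / 4 - 5 * d / 16 := by linarith
        nlinarith [mul_le_mul_of_nonneg_left Lu this]
      rw [inv_eq_one_div, le_div_iff₀ L0]; exact this
    have : (3 / 4 + ε) * (2 - 9 * d) ≤ (3 / 4 + ε) * ∑ j, max (a j) (b j) :=
      mul_le_mul_of_nonneg_left (by linarith) (by linarith)
    nlinarith

/-- Theorem 2, efficiency: in any strongly competitive normalized
two-player price-anticipating allocation game (budgets `1`, weights summing to `1`),
every Nash equilibrium has social welfare at least `3/4` of the social optimum
`U* = ∑ j, max_i w i j`; moreover the constant `3/4` is tight in the worst case. -/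
theorem twoPlayer_efficiency :
    (∀ (n : ℕ) (w : Fin 2 → Fin n → ℝ),
      (∀ i j, 0 ≤ w i j) → (∀ i, ∑ j, w i j = 1) →
      (∀ j, ∃ i k : Fin 2, i ≠ k ∧ 0 < w i j ∧ 0 < w k j) →
      ∀ x : Fin 2 → Fin n → ℝ, IsNash 2 n (fun _ => 1) w x →
        3 / 4 * (∑ j, max (w 0 j) (w 1 j)) ≤ ∑ i, util 2 n w x i) ∧
    (∀ ε : ℝ, 0 < ε →
      ∃ (n : ℕ) (w : Fin 2 → Fin n → ℝ),
        (∀ i j, 0 ≤ w i j) ∧ (∀ i, ∑ j, w i j = 1) ∧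
        (∀ j, ∃ i k : Fin 2, i ≠ k ∧ 0 < w i j ∧ 0 < w k j) ∧
        ∃ x : Fin 2 → Fin n → ℝ, IsNash 2 n (fun _ => 1) w x ∧
          ∑ i, util 2 n w x i < (3 / 4 + ε) * (∑ j, max (w 0 j) (w 1 j))) := by
  constructor
  · intro n w hw hws hsc x hN
    rw [isNash_iff] at hN
    obtain ⟨⟨hx, hxs⟩, hB, hC⟩ := hN
    have hpos : ∀ i j, 0 < w i j := by
      intro i j
      obtain ⟨p, q, hpq, hp, hq⟩ := hsc j
      have : i = p ∨ i = q := by omega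
      rcases this with rfl | rfl <;> assumption
    obtain ⟨px, py, l, m, hl, hm, h1, h2⟩ := nash_foc (hpos 0) (hpos 1) (hx 0) (hxs 0)
      (hx 1) (hxs 1) hB hC
    have h2' : ∀ j, w 1 j * x 0 j = m * (x 1 j + x 0 j) ^ 2 := by
      intro j; rw [h2 j, add_comm (x 0 j)]
    have h1' : ∀ j, w 0 j * x 1 j = l * (x 1 j + x 0 j) ^ 2 := by
      intro j; rw [h1 j, add_comm (x 0 j)]
    rw [Fin.sum_univ_two, util_zero, util_one,
      util_of_foc px (hxs 0) py (hxs 1) (hws 0) h1,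
      util_of_foc py (hxs 1) px (hxs 0) (hws 1) h2']
    rcases le_total m l with h | h
    · have := efficiency px (hxs 0) py (hxs 1) (hws 0) (hws 1) hm h h1 h2
      linarith
    · have := efficiency py (hxs 1) px (hxs 0) (hws 1) (hws 0) hl h h2' h1'
      simp_rw [max_comm (w 0 _)]
      linarith
  · intro ε hε
    exact tight (min (1 / 9) (ε / 8)) ε (lt_min (by norm_num) (by linarith)) (min_le_left _ _)
      (by linarith [min_le_right (1 / 9) (ε / 8)])
end

section
/- (Theorem 2, utility uniformity) In any strongly competitive normalized two-player price-anticipating allocation game, at every Nash equilibrium each user's utility is at least 1/2 and at most 1; consequently the utility uniformity min_i U_i / max_i U_i is at least 1/2, and this bound is tight in the worst case. -/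
open Finset

lemma ua_upd0 {n : ℕ} (w x : Fin 2 → Fin n → ℝ) (s : Fin n → ℝ) :
    util 2 n w (Function.update x 0 s) 0 = ∑ j, w 0 j * (s j / (s j + x 1 j)) := by
  simp [util, Fin.sum_univ_two]

lemma ua_upd1 {n : ℕ} (w x : Fin 2 → Fin n → ℝ) (s : Fin n → ℝ) :
    util 2 n w (Function.update x 1 s) 1 = ∑ j, w 1 j * (s j / (s j + x 0 j)) := by
  simp [util, Fin.sum_univ_two, add_comm]

lemma ua_u0 {n : ℕ} (w x : Fin 2 → Fin n → ℝ) :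
    util 2 n w x 0 = ∑ j, w 0 j * (x 0 j / (x 0 j + x 1 j)) := by
  simp [util, Fin.sum_univ_two]

lemma ua_u1 {n : ℕ} (w x : Fin 2 → Fin n → ℝ) :
    util 2 n w x 1 = ∑ j, w 1 j * (x 1 j / (x 1 j + x 0 j)) := by
  simp [util, Fin.sum_univ_two, add_comm]

/-- Mixing the opponent's bid with one's own weights guarantees almost one half. -/
lemma ua_lower {n : ℕ} (w v : Fin n → ℝ) (U : ℝ) (hw : ∀ j, 0 < w j) (hw1 : ∑ j, w j = 1)
    (hv : ∀ j, 0 ≤ v j) (hv1 : ∑ j, v j = 1)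
    (h : ∀ s : Fin n → ℝ, (∀ j, 0 ≤ s j) → ∑ j, s j = 1 →
      ∑ j, w j * (s j / (s j + v j)) ≤ U) : 1 / 2 ≤ U := by
  refine le_of_forall_pos_le_add fun δ hδ => ?_
  obtain ⟨d, hd0, hd1, hdδ⟩ : ∃ d : ℝ, 0 < d ∧ d ≤ 1 ∧ d ≤ δ :=
    ⟨min δ 1, by positivity, min_le_right _ _, min_le_left _ _⟩
  have hs : ∀ j, 0 < (1 - d) * v j + d * w j := fun j => by
    have := mul_nonneg (sub_nonneg.2 hd1) (hv j)
    have := mul_pos hd0 (hw j)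
    linarith
  have key := h (fun j => (1 - d) * v j + d * w j) (fun j => (hs j).le) (by
    rw [sum_add_distrib, ← mul_sum, ← mul_sum, hw1, hv1]; ring)
  have : ∑ j, w j * ((1 - d) / 2) ≤
      ∑ j, w j * (((1 - d) * v j + d * w j) / ((1 - d) * v j + d * w j + v j)) := by
    refine sum_le_sum fun j _ => mul_le_mul_of_nonneg_left ?_ (hw j).le
    have h1 := hs j
    have h2 := hv j
    have h3 := mul_pos hd0 (hw j)
    rw [le_div_iff₀ (by linarith)]
    nlinarith [mul_pos hd0 h1]
  rw [← sum_mul, hw1] at this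
  linarith

lemma ua_upper {n : ℕ} (w u v : Fin n → ℝ) (hw : ∀ j, 0 < w j) (hw1 : ∑ j, w j = 1)
    (hu : ∀ j, 0 ≤ u j) (hv : ∀ j, 0 ≤ v j) : ∑ j, w j * (u j / (u j + v j)) ≤ 1 := by
  rw [← hw1]
  refine sum_le_sum fun j _ => mul_le_of_le_one_right (hw j).le ?_
  exact div_le_one_of_le₀ (by linarith [hv j]) (by linarith [hu j, hv j])

/-- Weights making `u` a best response to `v`. -/
noncomputable def uaW {n : ℕ} (u v : Fin n → ℝ) (j : Fin n) : ℝ :=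
  (u j + v j) ^ 2 / v j / (∑ k, u k ^ 2 / v k + 3)

lemma ua_den {n : ℕ} (u v : Fin n → ℝ) (hv : ∀ j, 0 < v j) : 0 < ∑ k, u k ^ 2 / v k + 3 := by
  have : 0 ≤ ∑ k, u k ^ 2 / v k := sum_nonneg fun k _ => div_nonneg (sq_nonneg _) (hv k).le
  linarith

lemma uaW_pos {n : ℕ} (u v : Fin n → ℝ) (hu : ∀ j, 0 < u j) (hv : ∀ j, 0 < v j) (j : Fin n) :
    0 < uaW u v j := by
  have := ua_den u v hv
  have := hu j
  have := hv j
  unfold uaW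
  positivity

lemma uaW_sum {n : ℕ} (u v : Fin n → ℝ) (hv : ∀ j, 0 < v j)
    (hu1 : ∑ j, u j = 1) (hv1 : ∑ j, v j = 1) : ∑ j, uaW u v j = 1 := by
  unfold uaW
  rw [← sum_div, div_eq_one_iff_eq (ua_den u v hv).ne']
  have : ∀ j, (u j + v j) ^ 2 / v j = u j ^ 2 / v j + 2 * u j + v j := fun j => by
    have := (hv j).ne'
    field_simp
    ring
  simp only [this, sum_add_distrib, ← mul_sum, hu1, hv1]
  ring

lemma uaW_util {n : ℕ} (u v : Fin n → ℝ) (hu : ∀ j, 0 < u j) (hv : ∀ j, 0 < v j)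
    (hu1 : ∑ j, u j = 1) :
    ∑ j, uaW u v j * (u j / (u j + v j)) =
      (∑ k, u k ^ 2 / v k + 1) / (∑ k, u k ^ 2 / v k + 3) := by
  have h0 := ua_den u v hv
  have : ∀ j, uaW u v j * (u j / (u j + v j)) =
      (u j ^ 2 / v j + u j) / (∑ k, u k ^ 2 / v k + 3) := fun j => by
    unfold uaW
    generalize ∑ k, u k ^ 2 / v k + 3 = D at *
    have := hv j
    have := hu j
    field_simp
  simp only [this, ← sum_div, sum_add_distrib, hu1]

lemma uaW_best {n : ℕ} (u v s : Fin n → ℝ) (hu : ∀ j, 0 < u j) (hv : ∀ j, 0 < v j)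
    (hs : ∀ j, 0 ≤ s j) (hu1 : ∑ j, u j = 1) (hs1 : ∑ j, s j = 1) :
    ∑ j, uaW u v j * (s j / (s j + v j)) ≤ ∑ j, uaW u v j * (u j / (u j + v j)) := by
  have h0 := ua_den u v hv
  have : ∀ j, uaW u v j * (s j / (s j + v j)) ≤ uaW u v j * (u j / (u j + v j)) +
      (s j - u j) / (∑ k, u k ^ 2 / v k + 3) := fun j => by
    have hW := uaW_pos u v hu hv j
    have e : (s j - u j) / (∑ k, u k ^ 2 / v k + 3) =
        uaW u v j * (v j * (s j - u j) / (u j + v j) ^ 2) := by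
      unfold uaW
      generalize ∑ k, u k ^ 2 / v k + 3 = D at *
      have := hv j
      have := hu j
      field_simp
    rw [e, ← mul_add]
    refine mul_le_mul_of_nonneg_left ?_ hW.le
    have h1 := hv j
    have h2 := hu j
    have h3 := hs j
    have : u j / (u j + v j) + v j * (s j - u j) / (u j + v j) ^ 2 - s j / (s j + v j) =
        v j * (s j - u j) ^ 2 / ((u j + v j) ^ 2 * (s j + v j)) := by
      field_simp
      ring
    have : 0 ≤ v j * (s j - u j) ^ 2 / ((u j + v j) ^ 2 * (s j + v j)) := by positivity
    linarith
  refine (sum_le_sum fun j _ => this j).trans ?_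
  rw [sum_add_distrib, ← sum_div, sum_sub_distrib, hu1, hs1]
  simp

/-- Theorem 2, utility uniformity: in any strongly competitive normalized
two-player price-anticipating allocation game, at every Nash equilibrium each user's
utility lies in `[1/2, 1]`; consequently the utility uniformity
`min_i U_i / max_i U_i` is at least `1/2`, and this bound is tight in the worst case. -/
theorem twoPlayer_utility_uniformity :
    (∀ (n : ℕ) (w : Fin 2 → Fin n → ℝ),
      (∀ i j, 0 ≤ w i j) → (∀ i, ∑ j, w i j = 1) →
      (∀ j, ∃ i k : Fin 2, i ≠ k ∧ 0 < w i j ∧ 0 < w k j) →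
      ∀ x : Fin 2 → Fin n → ℝ, IsNash 2 n (fun _ => 1) w x →
        (∀ i, 1 / 2 ≤ util 2 n w x i ∧ util 2 n w x i ≤ 1) ∧
        1 / 2 ≤ min (util 2 n w x 0) (util 2 n w x 1) /
                  max (util 2 n w x 0) (util 2 n w x 1)) ∧
    (∀ ε : ℝ, 0 < ε →
      ∃ (n : ℕ) (w : Fin 2 → Fin n → ℝ),
        (∀ i j, 0 ≤ w i j) ∧ (∀ i, ∑ j, w i j = 1) ∧
        (∀ j, ∃ i k : Fin 2, i ≠ k ∧ 0 < w i j ∧ 0 < w k j) ∧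
        ∃ x : Fin 2 → Fin n → ℝ, IsNash 2 n (fun _ => 1) w x ∧
          min (util 2 n w x 0) (util 2 n w x 1) /
            max (util 2 n w x 0) (util 2 n w x 1) < 1 / 2 + ε) := by
  constructor
  · intro n w hw hw1 hc x ⟨⟨hx0, hx1⟩, hN⟩
    have hp : ∀ i j, 0 < w i j := by
      intro i j
      obtain ⟨a, b, hab, ha, hb⟩ := hc j
      fin_cases a <;> fin_cases b <;> fin_cases i <;> simp_all
    have l0 : 1 / 2 ≤ util 2 n w x 0 := ua_lower (w 0) (x 1) _ (hp 0) (hw1 0) (hx0 1) (hx1 1)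
      fun s hs hs1 => by rw [← ua_upd0]; exact hN 0 s hs hs1
    have l1 : 1 / 2 ≤ util 2 n w x 1 := ua_lower (w 1) (x 0) _ (hp 1) (hw1 1) (hx0 0) (hx1 0)
      fun s hs hs1 => by rw [← ua_upd1]; exact hN 1 s hs hs1
    have u0 : util 2 n w x 0 ≤ 1 := by
      rw [ua_u0]; exact ua_upper _ _ _ (hp 0) (hw1 0) (hx0 0) (hx0 1)
    have u1 : util 2 n w x 1 ≤ 1 := by
      rw [ua_u1]; exact ua_upper _ _ _ (hp 1) (hw1 1) (hx0 1) (hx0 0)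
    refine ⟨?_, ?_⟩
    · rw [Fin.forall_fin_two]
      exact ⟨⟨l0, u0⟩, ⟨l1, u1⟩⟩
    · have hmin := le_min l0 l1
      have hmax := max_le u0 u1
      have hmm : (1 : ℝ) / 2 ≤ max (util 2 n w x 0) (util 2 n w x 1) := le_max_of_le_left l0
      rw [le_div_iff₀ (by linarith)]
      linarith
  · intro ε hε
    obtain ⟨p, hp0, hp1, hpε⟩ : ∃ p : ℝ, 0 < p ∧ p ≤ 1 / 4 ∧ p ≤ ε / 4 :=
      ⟨min ε 1 / 4, by positivity, by linarith [min_le_right ε 1], by linarith [min_le_left ε 1]⟩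
    have hq0 : 0 < p ^ 3 := by positivity
    have hq1 : p ^ 3 < 1 := pow_lt_one₀ hp0.le (by linarith) (by norm_num)
    obtain ⟨u, hu⟩ : ∃ u : Fin 2 → ℝ, u = ![1 - p, p] := ⟨_, rfl⟩
    obtain ⟨v, hv⟩ : ∃ v : Fin 2 → ℝ, v = ![1 - p ^ 3, p ^ 3] := ⟨_, rfl⟩
    have hu0 : ∀ j, 0 < u j := by
      rw [Fin.forall_fin_two]; simp [hu]; constructor <;> linarith
    have hv0 : ∀ j, 0 < v j := by
      rw [Fin.forall_fin_two]; simp [hv]; constructor <;> linarith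
    have hu1 : ∑ j, u j = 1 := by simp [hu]
    have hv1 : ∑ j, v j = 1 := by simp [hv]
    have hW0 := uaW_pos u v hu0 hv0
    have hW1 := uaW_pos v u hv0 hu0
    have hU0 : util 2 2 ![uaW u v, uaW v u] ![u, v] 0 =
        (∑ k, u k ^ 2 / v k + 1) / (∑ k, u k ^ 2 / v k + 3) := by
      rw [ua_u0]; exact uaW_util u v hu0 hv0 hu1
    have hU1 : util 2 2 ![uaW u v, uaW v u] ![u, v] 1 =
        (∑ k, v k ^ 2 / u k + 1) / (∑ k, v k ^ 2 / u k + 3) := by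
      rw [ua_u1]; exact uaW_util v u hv0 hu0 hv1
    refine ⟨2, ![uaW u v, uaW v u], ?_, ?_, ?_, ![u, v], ⟨⟨?_, ?_⟩, ?_⟩, ?_⟩
    · rw [Fin.forall_fin_two]
      exact ⟨fun j => (hW0 j).le, fun j => (hW1 j).le⟩
    · rw [Fin.forall_fin_two]
      exact ⟨uaW_sum u v hv0 hu1 hv1, uaW_sum v u hu0 hv1 hu1⟩
    · exact fun j => ⟨0, 1, by decide, hW0 j, hW1 j⟩
    · rw [Fin.forall_fin_two]
      exact ⟨fun j => (hu0 j).le, fun j => (hv0 j).le⟩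
    · rw [Fin.forall_fin_two]
      exact ⟨hu1, hv1⟩
    · rw [Fin.forall_fin_two]
      constructor
      · intro s hs hs1
        rw [ua_upd0, ua_u0]
        exact uaW_best u v s hu0 hv0 hs hu1 hs1
      · intro s hs hs1
        rw [ua_upd1, ua_u1]
        exact uaW_best v u s hv0 hu0 hs hv1 hs1
    · have hS : 1 / p ≤ ∑ k, u k ^ 2 / v k := by
        have e : u 1 ^ 2 / v 1 = 1 / p := by simp [hu, hv]; field_simp
        rw [← e]
        exact single_le_sum (f := fun k => u k ^ 2 / v k)
          (fun k _ => div_nonneg (sq_nonneg _) (hv0 k).le) (mem_univ 1)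
      have hT : ∑ k, v k ^ 2 / u k ≤ 1 + 3 * p := by
        have a : (1 - p ^ 3) ^ 2 / (1 - p) ≤ 1 + 2 * p := by
          rw [div_le_iff₀ (by linarith)]
          nlinarith
        have b : (p ^ 3) ^ 2 / p ≤ p := by
          rw [div_le_iff₀ hp0]
          have : p ^ 4 ≤ 1 := pow_le_one₀ hp0.le (by linarith)
          nlinarith [sq_nonneg p]
        rw [Fin.sum_univ_two]
        simp only [hu, hv, Matrix.cons_val_zero, Matrix.cons_val_one]
        linarith
      have dS := ua_den u v hv0
      have dT := ua_den v u hu0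
      generalize ∑ k, u k ^ 2 / v k = S at *
      generalize ∑ k, v k ^ 2 / u k = T at *
      have bU0 : 1 - 2 * p ≤ util 2 2 ![uaW u v, uaW v u] ![u, v] 0 := by
        rw [hU0, le_div_iff₀ dS]
        rw [div_le_iff₀ hp0] at hS
        nlinarith
      have bU1 : util 2 2 ![uaW u v, uaW v u] ![u, v] 1 ≤ 1 / 2 + 3 / 8 * p := by
        rw [hU1, div_le_iff₀ dT]
        nlinarith
      have hmx := bU0.trans (le_max_left _ (util 2 2 ![uaW u v, uaW v u] ![u, v] 1))
      have hmn := (min_le_right (util 2 2 ![uaW u v, uaW v u] ![u, v] 0) _).trans bU1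
      rw [div_lt_iff₀ (by linarith)]
      refine lt_of_le_of_lt hmn (lt_of_lt_of_le ?_ (mul_le_mul_of_nonneg_left hmx (by linarith)))
      nlinarith
end

section
/- (Theorem 2, envy-freeness) In any strongly competitive normalized two-player price-anticipating allocation game, every Nash equilibrium allocation is envy-free: if r_1 = (r_{11},…,r_{1n}) and r_2 = (r_{21},…,r_{2n}) are the two users' received fractions at the equilibrium, then U_1(r_1) ≥ U_1(r_2) and U_2(r_2) ≥ U_2(r_1), where U_i(r) = Σ_j w_{ij} r_j. -/
open Finset

/-- One-sided version: a best response `a` to `b` is not envious of `b`. -/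
lemma best_response_no_envy (n : ℕ) (w a b : Fin n → ℝ) (hw : ∀ j, 0 < w j)
    (ha : ∀ j, 0 ≤ a j) (hb : ∀ j, 0 ≤ b j) (sa : ∑ j, a j = 1) (sb : ∑ j, b j = 1)
    (h : ∀ y : Fin n → ℝ, (∀ j, 0 ≤ y j) → ∑ j, y j = 1 →
      ∑ j, w j * (y j / (y j + b j)) ≤ ∑ j, w j * (a j / (a j + b j))) :
    ∑ j, w j * (b j / (a j + b j)) ≤ ∑ j, w j * (a j / (a j + b j)) := by
  -- wherever the opponent bids nothing, a best response bids nothing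
  have key : ∀ j, b j = 0 → a j = 0 := by
    intro j hj
    by_contra hne
    have haj : 0 < a j := lt_of_le_of_ne (ha j) (Ne.symm hne)
    obtain ⟨k, hk⟩ : ∃ k, 0 < b k := by
      by_contra hcon
      push Not at hcon
      have : ∑ j, b j ≤ 0 := Finset.sum_nonpos (fun i _ => hcon i)
      linarith
    have hkj : k ≠ j := by
      rintro rfl
      linarith
    let y : Fin n → ℝ := fun i =>
      a i + ((if i = k then a j / 2 else 0) - (if i = j then a j / 2 else 0))
    have yk : y k = a k + a j / 2 := by simp [y, hkj]
    have yj : y j = a j / 2 := by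
      simp only [y, if_neg hkj.symm, if_true]
      ring
    have yo : ∀ i, i ≠ k → i ≠ j → y i = a i := by
      intro i h1 h2
      simp [y, h1, h2]
    have hy0 : ∀ i, 0 ≤ y i := by
      intro i
      by_cases h1 : i = k
      · subst h1
        rw [yk]
        linarith [ha i]
      by_cases h2 : i = j
      · subst h2
        rw [yj]
        linarith
      rw [yo i h1 h2]
      exact ha i
    have hys : ∑ i, y i = 1 := by
      simp [y, Finset.sum_add_distrib, Finset.sum_sub_distrib, sa]
    have hk' : w k * (a k / (a k + b k)) < w k * (y k / (y k + b k)) := by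
      apply mul_lt_mul_of_pos_left _ (hw k)
      rw [yk, div_lt_div_iff₀ (by linarith [ha k]) (by linarith [ha k])]
      nlinarith [mul_pos haj hk]
    have hlt : ∑ i, w i * (a i / (a i + b i)) < ∑ i, w i * (y i / (y i + b i)) := by
      apply Finset.sum_lt_sum
      · intro i _
        by_cases h1 : i = k
        · subst h1
          exact hk'.le
        by_cases h2 : i = j
        · subst h2
          rw [yj, hj, add_zero, add_zero, div_self hne, div_self (by linarith)]
        rw [yo i h1 h2]
      · exact ⟨k, Finset.mem_univ k, hk'⟩
    exact absurd (h y hy0 hys) (not_le.mpr hlt)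
  have hc := h b hb sb
  have e : ∑ j, w j * (b j / (a j + b j)) + ∑ j, w j * (a j / (a j + b j))
      = 2 * ∑ j, w j * (b j / (b j + b j)) := by
    rw [← Finset.sum_add_distrib, Finset.mul_sum]
    apply Finset.sum_congr rfl
    intro j _
    by_cases hj : b j = 0
    · simp [hj, key j hj]
    · have hbj : 0 < b j := lt_of_le_of_ne (hb j) (Ne.symm hj)
      have : a j + b j ≠ 0 := by linarith [ha j]
      field_simp
      ring
  linarith

/-- Theorem 2, envy-freeness: in any strongly competitive normalized
two-player price-anticipating allocation game, every Nash equilibrium allocation is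
envy-free: each user values his own received fraction vector `r i j = x i j / Y j`
at least as much as the other user's. -/
theorem twoPlayer_envy_free (n : ℕ) (w : Fin 2 → Fin n → ℝ)
    (hw : ∀ i j, 0 ≤ w i j) (hws : ∀ i, ∑ j, w i j = 1)
    (hsc : ∀ j, ∃ i k : Fin 2, i ≠ k ∧ 0 < w i j ∧ 0 < w k j)
    (x : Fin 2 → Fin n → ℝ) (hx : IsNash 2 n (fun _ => 1) w x) :
    let r : Fin 2 → Fin n → ℝ := fun i j => x i j / ∑ k, x k j
    (∑ j, w 0 j * r 1 j ≤ ∑ j, w 0 j * r 0 j) ∧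
    (∑ j, w 1 j * r 0 j ≤ ∑ j, w 1 j * r 1 j) := by
  have hpos : ∀ i j, 0 < w i j := by
    intro i j
    obtain ⟨p, q, hpq, hp, hq⟩ := hsc j
    fin_cases p <;> fin_cases q <;> fin_cases i <;> simp_all
  obtain ⟨⟨hx0, hxs⟩, hn⟩ := hx
  intro r
  constructor
  · have := best_response_no_envy n (w 0) (x 0) (x 1) (hpos 0) (hx0 0) (hx0 1) (hxs 0) (hxs 1)
      (by
        intro y hy hys
        simpa [util, Fin.sum_univ_two] using hn 0 y hy hys)
    simpa [r, Fin.sum_univ_two] using this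
  · have := best_response_no_envy n (w 1) (x 1) (x 0) (hpos 1) (hx0 1) (hx0 0) (hxs 1) (hxs 0)
      (by
        intro y hy hys
        simpa [util, Fin.sum_univ_two, add_comm] using hn 1 y hy hys)
    simpa [r, Fin.sum_univ_two, add_comm] using this
end

section
/- (Correctness of the best-response algorithm) Let n ≥ 1, let w_j > 0 and y_j > 0 for j = 1,…,n with w_1/y_1 ≥ w_2/y_2 ≥ … ≥ w_n/y_n, and let X > 0. Let k be the largest index t ∈ {1,…,n} such that (√(w_t y_t)/Σ_{i=1}^t √(w_i y_i))·(X + Σ_{i=1}^t y_i) − y_t ≥ 0 (such t exists since t = 1 satisfies the condition). Define x_j = (√(w_j y_j)/Σ_{i=1}^k √(w_i y_i))·(X + Σ_{i=1}^k y_i) − y_j for 1 ≤ j ≤ k and x_j = 0 for j > k. Then x is feasible (x_j ≥ 0 for all j and Σ_j x_j = X) and x maximizes U(x) = Σ_{j=1}^n w_j x_j/(x_j + y_j) over all feasible vectors. -/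
open Finset

/-- Correctness of the best-response algorithm: with machines sorted so
that `w 0 / y 0 ≥ w 1 / y 1 ≥ … ≥ w (n-1) / y (n-1)` (all weights and opposing bids
positive) and budget `X > 0`, let `k` be the largest index such that
`(√(w k · y k) / ∑_{i ≤ k} √(w i · y i)) · (X + ∑_{i ≤ k} y i) - y k ≥ 0`. Then the bid
vector produced by the algorithm — `x j = (√(w j · y j) / ∑_{i ≤ k} √(w i · y i)) ·
(X + ∑_{i ≤ k} y i) - y j` for `j ≤ k` and `x j = 0` otherwise — is feasible and
maximizes `U(x) = ∑ j, w j · x j / (x j + y j)` over all feasible bid vectors. -/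
theorem bestResponse_algorithm_correct (n : ℕ) (hn : 1 ≤ n)
    (w y : Fin n → ℝ) (hw : ∀ j, 0 < w j) (hy : ∀ j, 0 < y j)
    (hsort : ∀ i j : Fin n, i ≤ j → w j / y j ≤ w i / y i)
    (X : ℝ) (hX : 0 < X) (k : Fin n)
    (hk : 0 ≤ Real.sqrt (w k * y k) / (∑ i ∈ Finset.Iic k, Real.sqrt (w i * y i)) *
            (X + ∑ i ∈ Finset.Iic k, y i) - y k)
    (hkmax : ∀ t : Fin n, k < t →
      Real.sqrt (w t * y t) / (∑ i ∈ Finset.Iic t, Real.sqrt (w i * y i)) *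
          (X + ∑ i ∈ Finset.Iic t, y i) - y t < 0) :
    let x : Fin n → ℝ := fun j =>
      if j ≤ k then
        Real.sqrt (w j * y j) / (∑ i ∈ Finset.Iic k, Real.sqrt (w i * y i)) *
            (X + ∑ i ∈ Finset.Iic k, y i) - y j
      else 0
    (∀ j, 0 ≤ x j) ∧ (∑ j, x j = X) ∧
    ∀ x' : Fin n → ℝ, (∀ j, 0 ≤ x' j) → ∑ j, x' j = X →
      ∑ j, w j * (x' j / (x' j + y j)) ≤ ∑ j, w j * (x j / (x j + y j)) := by
  intro x
  have hsp : ∀ j, 0 < Real.sqrt (w j * y j) := fun j => Real.sqrt_pos.mpr (mul_pos (hw j) (hy j))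
  have hsq : ∀ j, Real.sqrt (w j * y j) ^ 2 = w j * y j :=
    fun j => Real.sq_sqrt (mul_pos (hw j) (hy j)).le
  have hx : x = fun j => if j ≤ k then
        Real.sqrt (w j * y j) / (∑ i ∈ Finset.Iic k, Real.sqrt (w i * y i)) *
            (X + ∑ i ∈ Finset.Iic k, y i) - y j
      else 0 := rfl
  clear_value x
  generalize hs : (fun j => Real.sqrt (w j * y j)) = s at *
  have hs' : ∀ j, Real.sqrt (w j * y j) = s j := fun j => congrFun hs j
  simp only [hs'] at *
  have hSp : 0 < ∑ i ∈ Finset.Iic k, s i :=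
    Finset.sum_pos (fun i _ => hsp i) ⟨k, by simp⟩
  have hYp : 0 < X + ∑ i ∈ Finset.Iic k, y i := by
    have : 0 ≤ ∑ i ∈ Finset.Iic k, y i := Finset.sum_nonneg (fun i _ => (hy i).le)
    linarith
  have hmono : ∀ i j : Fin n, i ≤ j → s j * y i ≤ s i * y j := by
    intro i j hij
    have h := hsort i j hij
    rw [div_le_div_iff₀ (hy j) (hy i)] at h
    have h1 := hy i
    have h2 := hy j
    have h3 := hsp i
    have h4 := hsp j
    refine (sq_le_sq₀ (by positivity) (by positivity)).mp ?_
    rw [mul_pow, mul_pow, hsq, hsq]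
    have := mul_le_mul_of_nonneg_right h (mul_pos h1 h2).le
    nlinarith
  have hstep : ∀ t : Fin n, k < t → s t * (X + ∑ i ∈ Finset.Iic k, y i) ≤
      y t * ∑ i ∈ Finset.Iic k, s i := by
    intro j hj
    have hlt : k.val + 1 < n := lt_of_le_of_lt (Nat.succ_le_of_lt hj) j.2
    obtain ⟨t, ht⟩ : ∃ t : Fin n, t = ⟨k.val + 1, hlt⟩ := ⟨_, rfl⟩
    have hkt : k < t := by rw [ht, Fin.lt_def]; simp
    have htj : t ≤ j := by rw [ht, Fin.le_def]; exact hj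
    have hI : Finset.Iic t = insert t (Finset.Iic k) := by
      ext i
      simp only [Finset.mem_Iic, Finset.mem_insert, Fin.le_def, Fin.ext_iff, ht]
      omega
    have hnot : t ∉ Finset.Iic k := by simpa using hkt
    have h := hkmax t hkt
    rw [hI, Finset.sum_insert hnot, Finset.sum_insert hnot] at h
    have hpos := add_pos (hsp t) hSp
    have h1 : s t * (X + (y t + ∑ i ∈ Finset.Iic k, y i)) <
        y t * (s t + ∑ i ∈ Finset.Iic k, s i) := by
      rw [← div_lt_iff₀ hpos, ← div_mul_eq_mul_div]
      linarith
    have h2 : s t * (X + ∑ i ∈ Finset.Iic k, y i) ≤ y t * ∑ i ∈ Finset.Iic k, s i := by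
      linarith
    have h3 := hmono t j htj
    have h4 := mul_le_mul_of_nonneg_right h3 hYp.le
    have h5 := mul_le_mul_of_nonneg_left h2 (hy j).le
    refine le_of_mul_le_mul_left ?_ (hy t)
    linarith
  have hsumS : ∀ c : ℝ, ∑ j ∈ Finset.Iic k, (s j * c - y j) =
      (∑ j ∈ Finset.Iic k, s j) * c - ∑ j ∈ Finset.Iic k, y j := by
    intro c
    rw [Finset.sum_sub_distrib, Finset.sum_mul]
  generalize hS : ∑ i ∈ Finset.Iic k, s i = S at *
  generalize hY : ∑ i ∈ Finset.Iic k, y i = Y at *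
  obtain ⟨c, hc⟩ : ∃ c, c = (X + Y) / S := ⟨_, rfl⟩
  have hcp : 0 < c := hc ▸ div_pos hYp hSp
  have hcS : S * c = X + Y := by rw [hc]; field_simp
  have hrew : ∀ j, s j / S * (X + Y) = s j * c := by intro j; rw [hc]; ring
  simp only [hrew] at hx hk
  have hstep' : ∀ j, k < j → s j * c ≤ y j := by
    intro j hj
    have := hstep j hj
    rw [← hcS] at this
    refine le_of_mul_le_mul_left ?_ hSp
    linarith
  have hin : ∀ j, j ≤ k → y j ≤ s j * c := by
    intro j hj
    have h1 := hmono j k hj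
    refine le_of_mul_le_mul_left ?_ (hsp k)
    have := mul_le_mul_of_nonneg_left (sub_nonneg.mp hk) (hsp j).le
    linarith
  have hxsum : ∑ j, x j = X := by
    rw [hx, ← Finset.sum_filter]
    have : Finset.univ.filter (fun j => j ≤ k) = Finset.Iic k := by ext; simp
    rw [this, hsumS, hcS]
    ring
  refine ⟨?_, hxsum, ?_⟩
  · intro j
    rw [hx]
    dsimp only
    split_ifs with h
    · linarith [hin j h]
    · exact le_rfl
  · intro x' hx' hsum'
    have key : ∀ j, w j * (x' j / (x' j + y j)) ≤
        w j * (x j / (x j + y j)) + (x' j - x j) / c ^ 2 := by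
      intro j
      have hz : 0 < x' j + y j := add_pos_of_nonneg_of_pos (hx' j) (hy j)
      have hyj := hy j
      have hsj := hsp j
      have hwj : w j = s j ^ 2 / y j := by rw [hsq]; field_simp
      by_cases h : j ≤ k
      · have hxj : x j = s j * c - y j := by rw [hx]; simp [h]
        have e : w j * (x j / (x j + y j)) + (x' j - x j) / c ^ 2 - w j * (x' j / (x' j + y j))
            = (x' j + y j - s j * c) ^ 2 / (c ^ 2 * (x' j + y j)) := by
          rw [hxj, hwj, sub_add_cancel]
          field_simp
          ring
        have : 0 ≤ (x' j + y j - s j * c) ^ 2 / (c ^ 2 * (x' j + y j)) := by positivity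
        linarith
      · have hxj : x j = 0 := by rw [hx]; simp [h]
        have h1 := hstep' j (not_le.mp h)
        have h2 : (s j * c) ^ 2 ≤ y j ^ 2 := pow_le_pow_left₀ (by positivity) h1 2
        have h3 : w j * c ^ 2 ≤ x' j + y j := by
          rw [mul_pow, hsq] at h2
          have : w j * c ^ 2 ≤ y j := by
            refine le_of_mul_le_mul_left ?_ hyj
            linarith
          linarith [hx' j]
        rw [hxj]
        simp only [zero_div, mul_zero, zero_add, sub_zero]
        rw [← mul_div_assoc, div_le_div_iff₀ hz (by positivity)]
        have := mul_le_mul_of_nonneg_left h3 (hx' j)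
        linarith
    calc _ ≤ ∑ j, (w j * (x j / (x j + y j)) + (x' j - x j) / c ^ 2) :=
          Finset.sum_le_sum (fun j _ => key j)
      _ = _ := by
          rw [Finset.sum_add_distrib, ← Finset.sum_div, Finset.sum_sub_distrib, hsum', hxsum]
          simp
end

section
/- (Monotone support of the best response) Let n ≥ 1, let w_j ≥ 0 and y_j > 0 for j = 1,…,n, let X > 0, and let x* maximize U(x) = Σ_{j=1}^n w_j x_j/(x_j + y_j) over all x with x_j ≥ 0 and Σ_j x_j = X. If i and j are indices with w_j > 0, w_i/y_i ≥ w_j/y_j, and x*_j > 0, then x*_i > 0. Equivalently, after sorting the machines so that w_1/y_1 ≥ … ≥ w_n/y_n, if x*_i = 0 then x*_j = 0 for every j > i with w_j > 0. -/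
open Finset

/-- Monotone support of the best response: if `x*` maximizes
`U(x) = ∑ j, w j · x j / (x j + y j)` over nonnegative bid vectors summing to the
budget `X > 0` (with all opposing bids `y j > 0` and weights `w j ≥ 0`), and `i, j` are
indices with `w j > 0`, `w i / y i ≥ w j / y j` and `x* j > 0`, then `x* i > 0`. -/
theorem bestResponse_monotone_support (n : ℕ) (hn : 1 ≤ n)
    (w y : Fin n → ℝ) (hw : ∀ j, 0 ≤ w j) (hy : ∀ j, 0 < y j)
    (X : ℝ) (hX : 0 < X)
    (xstar : Fin n → ℝ) (hx0 : ∀ j, 0 ≤ xstar j) (hxs : ∑ j, xstar j = X)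
    (hopt : ∀ x' : Fin n → ℝ, (∀ j, 0 ≤ x' j) → ∑ j, x' j = X →
      ∑ j, w j * (x' j / (x' j + y j)) ≤ ∑ j, w j * (xstar j / (xstar j + y j)))
    (i j : Fin n) (hwj : 0 < w j) (hratio : w j / y j ≤ w i / y i)
    (hxj : 0 < xstar j) :
    0 < xstar i := by
  by_contra hneg
  have hxi : xstar i = 0 := le_antisymm (not_lt.mp hneg) (hx0 i)
  have hij : i ≠ j := by
    rintro rfl
    exact hneg hxj
  have hb := hy i
  have hc := hy j
  obtain ⟨e, he0, hea, hce⟩ : ∃ e : ℝ, 0 < e ∧ e < xstar j ∧ y j * e < xstar j * y i := by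
    refine ⟨xstar j * y i / (y i + y j), by positivity, ?_, ?_⟩
    · rw [div_lt_iff₀ (by positivity)]
      nlinarith [mul_pos hxj hc]
    · rw [← mul_div_assoc, div_lt_iff₀ (by positivity)]
      nlinarith [mul_pos (mul_pos hxj hb) hb]
  have key := hopt (fun k => xstar k + (if k = i then e else 0) - (if k = j then e else 0))
    (by
      intro k
      by_cases h1 : k = i
      · subst h1
        simp [hij, hxi, he0.le]
      · by_cases h2 : k = j
        · subst h2
          simp [h1, hea.le]
        · simp [h1, h2, hx0 k])
    (by simp [Finset.sum_add_distrib, Finset.sum_sub_distrib, hxs])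
  have hU : ∀ k, w k * ((xstar k + (if k = i then e else 0) - (if k = j then e else 0)) /
      ((xstar k + (if k = i then e else 0) - (if k = j then e else 0)) + y k))
      = w k * (xstar k / (xstar k + y k)) + (if k = i then w i * (e / (e + y i)) else 0)
        - (if k = j then w j * (xstar j / (xstar j + y j))
            - w j * ((xstar j - e) / (xstar j - e + y j)) else 0) := by
    intro k
    by_cases h1 : k = i
    · subst h1
      simp [hij, hxi]
    · by_cases h2 : k = j
      · subst h2
        simp [h1]
      · simp [h1, h2]
  simp only [hU, Finset.sum_add_distrib, Finset.sum_sub_distrib, Finset.sum_ite_eq',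
    Finset.mem_univ, if_true] at key
  have hae : 0 < xstar j - e := by linarith
  generalize xstar j = a at *
  have h3 : w j / y j * (y i * e / (e + y i)) ≤ w i * (e / (e + y i)) := by
    calc w j / y j * (y i * e / (e + y i)) ≤ w i / y i * (y i * e / (e + y i)) := by gcongr
      _ = _ := by field_simp
  have h4 : w j * (a / (a + y j)) - w j * ((a - e) / (a - e + y j))
      = w j / y j * (y j * y j * e / ((a + y j) * (a - e + y j))) := by
    have : a - e + y j ≠ 0 := by positivity
    field_simp
    ring
  have h5 : y j * y j * e / ((a + y j) * (a - e + y j)) < y i * e / (e + y i) := by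
    rw [div_lt_div_iff₀ (by positivity) (by positivity)]
    have h6 : y j * (e + y i) < y i * (a + y j) := by nlinarith
    have h7 : y j * (y j * (e + y i)) < (a - e + y j) * (y i * (a + y j)) := by
      apply mul_lt_mul'' (by linarith) h6 <;> positivity
    nlinarith [mul_lt_mul_of_pos_left h7 he0]
  have h8 := mul_lt_mul_of_pos_left h5 (div_pos hwj hc)
  linarith
end

section
/- (Finite-parallelism social optimum equals maximum weight matching) Let there be m users and n machines with nonnegative weights w_{ij}, and let user i have parallelism bound k_i ≥ 1. Then the social optimum under the finite parallelism model — the maximum over all allocation schemes (r_{ij}) (with r_{ij} ≥ 0 and Σ_i r_{ij} ≤ 1 for each j) of Σ_i max_{A ⊆ {1,…,n}, |A| ≤ k_i} Σ_{j∈A} w_{ij} r_{ij} — equals the maximum of Σ_{(i,j)∈S} w_{ij} over all sets S ⊆ {1,…,m}×{1,…,n} of user–machine pairs in which each machine j occurs in at most one pair and each user i occurs in at most k_i pairs. -/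
open Finset

/-- Finite-parallelism social optimum equals maximum weight matching:
with `m` users, `n` machines, nonnegative weights `w i j` and parallelism bounds
`k i ≥ 1`, the maximum over all allocation schemes `(r i j)` of
`∑ i, max_{A ⊆ machines, |A| ≤ k i} ∑_{j ∈ A} w i j * r i j` is attained, and equals
the attained maximum of `∑_{(i,j) ∈ S} w i j` over all sets `S` of user–machine pairs
in which each machine occurs at most once and each user `i` occurs at most `k i`
times. -/
theorem finiteParallelism_socialOptimum_eq_maxMatching (m n : ℕ)
    (hm : 1 ≤ m) (hn : 1 ≤ n)
    (w : Fin m → Fin n → ℝ) (hw : ∀ i j, 0 ≤ w i j)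
    (k : Fin m → ℕ) (hk : ∀ i, 1 ≤ k i) :
    ∃ V : ℝ,
      IsGreatest
        {U : ℝ | ∃ r : Fin m → Fin n → ℝ,
          (∀ i j, 0 ≤ r i j) ∧ (∀ j, ∑ i, r i j ≤ 1) ∧
          U = ∑ i,
            ((Finset.univ : Finset (Finset (Fin n))).filter
                (fun A => A.card ≤ k i)).sup'
              ⟨∅, by simp⟩ (fun A => ∑ j ∈ A, w i j * r i j)} V ∧
      IsGreatest
        {W : ℝ | ∃ S : Finset (Fin m × Fin n),
          (∀ j, (S.filter (fun p => p.2 = j)).card ≤ 1) ∧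
          (∀ i, (S.filter (fun p => p.1 = i)).card ≤ k i) ∧
          W = ∑ p ∈ S, w p.1 p.2} V := by
  -- every allocation value is bounded by a matching value
  have key1 : ∀ r : Fin m → Fin n → ℝ, (∀ i j, 0 ≤ r i j) → (∀ j, ∑ i, r i j ≤ 1) →
      ∃ S : Finset (Fin m × Fin n),
        ((∀ j, (S.filter (fun p => p.2 = j)).card ≤ 1) ∧
          (∀ i, (S.filter (fun p => p.1 = i)).card ≤ k i)) ∧
        ∑ i, ((Finset.univ : Finset (Finset (Fin n))).filter
                (fun A => A.card ≤ k i)).sup'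
              ⟨∅, by simp⟩ (fun A => ∑ j ∈ A, w i j * r i j) ≤ ∑ p ∈ S, w p.1 p.2 := by
    intro r hr hr1
    have hA : ∀ i, ∃ A : Finset (Fin n), A.card ≤ k i ∧
        ((Finset.univ : Finset (Finset (Fin n))).filter
                (fun A => A.card ≤ k i)).sup'
              ⟨∅, by simp⟩ (fun A => ∑ j ∈ A, w i j * r i j) = ∑ j ∈ A, w i j * r i j := by
      intro i
      obtain ⟨A, hA, h⟩ := Finset.exists_mem_eq_sup' (s := (Finset.univ :
        Finset (Finset (Fin n))).filter (fun A => A.card ≤ k i)) ⟨∅, by simp⟩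
        (fun A => ∑ j ∈ A, w i j * r i j)
      exact ⟨A, (Finset.mem_filter.1 hA).2, h⟩
    choose A hAc hAe using hA
    have hf : ∀ j, ∃ i₀, ∀ i, (if j ∈ A i then w i j else 0) ≤
        (if j ∈ A i₀ then w i₀ j else 0) := by
      intro j
      haveI : Nonempty (Fin m) := ⟨⟨0, hm⟩⟩
      exact Finite.exists_max (fun i => if j ∈ A i then w i j else 0)
    choose f hf using hf
    refine ⟨Finset.univ.filter (fun p => p.2 ∈ A p.1 ∧ f p.2 = p.1), ⟨?_, ?_⟩, ?_⟩
    · intro j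
      rw [Finset.card_le_one]
      rintro ⟨a, b⟩ h1 ⟨c, d⟩ h2
      simp only [Finset.mem_filter, Finset.mem_univ, true_and] at h1 h2
      grind
    · intro i
      refine le_trans ?_ (hAc i)
      refine Finset.card_le_card_of_injOn Prod.snd ?_ ?_
      · rintro ⟨a, b⟩ h1
        simp only [Finset.coe_filter, Finset.mem_filter, Finset.mem_univ, true_and,
          Set.mem_setOf_eq] at h1
        obtain ⟨⟨h1, -⟩, rfl⟩ := h1
        exact h1
      · rintro ⟨a, b⟩ h1 ⟨c, d⟩ h2 h
        simp only [Finset.coe_filter, Finset.mem_filter, Finset.mem_univ, true_and,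
          Set.mem_setOf_eq] at h1 h2
        grind
    · rw [Finset.sum_congr rfl (fun i _ => hAe i)]
      have e1 : ∑ i, ∑ j ∈ A i, w i j * r i j
          = ∑ j, ∑ i, (if j ∈ A i then w i j else 0) * r i j := by
        rw [Finset.sum_comm]
        refine Finset.sum_congr rfl fun i _ => ?_
        simp [ite_mul, Finset.sum_ite_mem]
      have e2 : ∑ p ∈ Finset.univ.filter (fun p : Fin m × Fin n => p.2 ∈ A p.1 ∧ f p.2 = p.1),
          w p.1 p.2 = ∑ j, (if j ∈ A (f j) then w (f j) j else 0) := by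
        rw [Finset.sum_filter, Fintype.sum_prod_type, Finset.sum_comm]
        refine Finset.sum_congr rfl fun j _ => ?_
        rw [Finset.sum_eq_single (f j)]
        · simp
        · intro b _ hb
          rw [if_neg]
          rintro ⟨-, h⟩
          exact hb h.symm
        · simp
      rw [e1, e2]
      refine Finset.sum_le_sum fun j _ => ?_
      have h0 : 0 ≤ (if j ∈ A (f j) then w (f j) j else 0) := by
        split_ifs
        · exact hw _ _
        · exact le_rfl
      calc _ ≤ ∑ i, (if j ∈ A (f j) then w (f j) j else 0) * r i j :=
            Finset.sum_le_sum fun i _ => mul_le_mul_of_nonneg_right (hf j i) (hr i j)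
        _ = (if j ∈ A (f j) then w (f j) j else 0) * ∑ i, r i j := by rw [Finset.mul_sum]
        _ ≤ _ := mul_le_of_le_one_right h0 (hr1 j)
  -- an optimal matching
  obtain ⟨S, hS, hmax⟩ := Finset.exists_max_image
    ((Finset.univ : Finset (Finset (Fin m × Fin n))).filter (fun S =>
      (∀ j, (S.filter (fun p => p.2 = j)).card ≤ 1) ∧
          (∀ i, (S.filter (fun p => p.1 = i)).card ≤ k i)))
    (fun S => ∑ p ∈ S, w p.1 p.2) ⟨∅, by simp⟩
  simp only [Finset.mem_filter, Finset.mem_univ, true_and] at hS hmax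
  refine ⟨∑ p ∈ S, w p.1 p.2, ⟨?_, ?_⟩, ⟨S, hS.1, hS.2, rfl⟩, ?_⟩
  · have h0 : ∀ i j, (0:ℝ) ≤ (if (i, j) ∈ S then 1 else 0) := by
      intro i j
      split_ifs <;> norm_num
    have h1 : ∀ j, ∑ i, (if (i, j) ∈ S then (1:ℝ) else 0) ≤ 1 := by
      intro j
      rw [Finset.sum_boole]
      have : (Finset.univ.filter (fun i => (i, j) ∈ S)).card ≤ 1 := by
        refine le_trans ?_ (hS.1 j)
        refine Finset.card_le_card_of_injOn (fun i => (i, j)) ?_ ?_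
        · intro i hi
          simpa using hi
        · intro a _ b _ h
          exact (Prod.mk.inj h).1
      exact_mod_cast this
    refine ⟨fun i j => if (i, j) ∈ S then 1 else 0, h0, h1, le_antisymm ?_ ?_⟩
    · have e : ∑ p ∈ S, w p.1 p.2 = ∑ i, ∑ j ∈ Finset.univ.filter (fun j => (i, j) ∈ S),
          w i j * (if (i, j) ∈ S then 1 else 0) := by
        have e' : ∑ p ∈ S, w p.1 p.2 = ∑ p, if p ∈ S then w p.1 p.2 else 0 := by simp
        rw [e', Fintype.sum_prod_type]
        refine Finset.sum_congr rfl fun i _ => ?_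
        rw [Finset.sum_filter]
        refine Finset.sum_congr rfl fun j _ => ?_
        split_ifs <;> simp
      rw [e]
      refine Finset.sum_le_sum fun i _ => ?_
      refine Finset.le_sup' (fun A => ∑ j ∈ A, w i j * (if (i, j) ∈ S then (1:ℝ) else 0)) ?_
      simp only [Finset.mem_filter, Finset.mem_univ, true_and]
      refine le_trans ?_ (hS.2 i)
      refine Finset.card_le_card_of_injOn (fun j => (i, j)) ?_ ?_
      · intro j hj
        simpa using hj
      · intro a _ b _ h
        exact (Prod.mk.inj h).2
    · obtain ⟨T, hT, hle⟩ := key1 _ h0 h1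
      exact hle.trans (hmax T hT)
  · rintro U ⟨r, hr, hr1, rfl⟩
    obtain ⟨T, hT, hle⟩ := key1 r hr hr1
    exact hle.trans (hmax T hT)
  · rintro W ⟨T, h1, h2, rfl⟩
    exact hmax T ⟨h1, h2⟩
end

section
/- (Equilibrium utility identity U = 1 − 2λ) Consider a normalized two-player price-anticipating allocation game on n machines: user 1 has weights u_1,…,u_n ≥ 0 with Σ_j u_j = 1, budgets are X₁ = X₂ = 1, user 1 bids x_j > 0 and user 2 bids y_j > 0 on machine j with Σ_j x_j = Σ_j y_j = 1. If there is λ such that u_j·y_j/(x_j + y_j)² = λ for every j (user 1's equilibrium marginal condition), then user 1's utility satisfies U₁ = Σ_j u_j·x_j/(x_j + y_j) = 1 − 2λ. -/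
open Finset

/-- Equilibrium utility identity `U = 1 - 2λ`: in a normalized two-player
game on `n` machines (user 1's weights `u j ≥ 0` summing to `1`, both users' positive
bids `x j`, `y j` each summing to the budget `1`), if user 1's marginal utilities are
all equal to `λ`, i.e. `u j · y j / (x j + y j)² = λ` for every `j`, then user 1's
utility satisfies `∑ j, u j · x j / (x j + y j) = 1 - 2λ`. -/
theorem equilibrium_utility_identity (n : ℕ)
    (u x y : Fin n → ℝ) (hu : ∀ j, 0 ≤ u j) (hus : ∑ j, u j = 1)
    (hx : ∀ j, 0 < x j) (hy : ∀ j, 0 < y j)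
    (hxs : ∑ j, x j = 1) (hys : ∑ j, y j = 1)
    (l : ℝ) (hl : ∀ j, u j * y j / (x j + y j) ^ 2 = l) :
    ∑ j, u j * (x j / (x j + y j)) = 1 - 2 * l := by
  have key : ∀ j, u j * (x j / (x j + y j)) = u j - l * (x j + y j) := by
    intro j
    have h : x j + y j ≠ 0 := (add_pos (hx j) (hy j)).ne'
    rw [← hl j]
    field_simp
    ring
  simp only [key, Finset.sum_sub_distrib, ← Finset.mul_sum, Finset.sum_add_distrib, hus, hxs, hys]
  ring
end
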